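/- For n ≥ 2 and m ≥ 3, the zero forcing number of the lexicographic product of the complete graph K_n with the cycle C_m satisfies Z(K_n * C_m) = (n−1)m + 2. -/

import Mathlib

namespace PaperPD

open SimpleGraph

variable {V α β : Type*}

/-- Vertices that eventually become blue in the standard zero forcing process
starting from the blue set `B`. -/
inductive ZFClosure (G : SimpleGraph V) (B : Set V) : V → Prop
  | init (v : V) (hv : v ∈ B) : ZFClosure G B v
  | force (u w : V) (hu : ZFClosure G B u) (huw : G.Adj u w)
      (h : ∀ x, G.Adj u x → x ≠ w → ZFClosure G B x) : ZFClosure G B w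

/-- `B` is a zero forcing set of `G`. -/
def IsZeroForcingSet (G : SimpleGraph V) (B : Set V) : Prop :=
  ∀ v, ZFClosure G B v

/-- The zero forcing number `Z(G)`. -/
noncomputable def zeroForcingNumber (G : SimpleGraph V) [Fintype V] : ℕ :=
  sInf {k | ∃ B : Finset V, B.card = k ∧ IsZeroForcingSet G ↑B}

/-- Vertices that eventually become blue in the skew zero forcing process
starting from the blue set `B` (the forcing vertex need not be blue). -/
inductive SkewZFClosure (G : SimpleGraph V) (B : Set V) : V → Prop
  | init (v : V) (hv : v ∈ B) : SkewZFClosure G B v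
  | force (u w : V) (huw : G.Adj u w)
      (h : ∀ x, G.Adj u x → x ≠ w → SkewZFClosure G B x) : SkewZFClosure G B w

/-- `B` is a skew zero forcing set of `G`. -/
def IsSkewZeroForcingSet (G : SimpleGraph V) (B : Set V) : Prop :=
  ∀ v, SkewZFClosure G B v

/-- The skew zero forcing number `Z⁻(G)`. -/
noncomputable def skewZeroForcingNumber (G : SimpleGraph V) [Fintype V] : ℕ :=
  sInf {k | ∃ B : Finset V, B.card = k ∧ IsSkewZeroForcingSet G ↑B}

/-- The closed neighborhood `N[S]` of a set of vertices. -/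
def closedNbhd (G : SimpleGraph V) (S : Set V) : Set V :=
  S ∪ {v | ∃ u ∈ S, G.Adj u v}

/-- `S` is a power dominating set of `G`, i.e. `N[S]` is a zero forcing set. -/
def IsPowerDominatingSet (G : SimpleGraph V) (S : Set V) : Prop :=
  IsZeroForcingSet G (closedNbhd G S)

/-- The power domination number `γ_P(G)`. -/
noncomputable def powerDominationNumber (G : SimpleGraph V) [Fintype V] : ℕ :=
  sInf {k | ∃ S : Finset V, S.card = k ∧ IsPowerDominatingSet G ↑S}

/-- `S` is a dominating set of `G` (`N[S] = V`). -/
def IsDominatingSet (G : SimpleGraph V) (S : Set V) : Prop :=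
  ∀ v, v ∈ closedNbhd G S

/-- The domination number `γ(G)`. -/
noncomputable def dominationNumber (G : SimpleGraph V) [Fintype V] : ℕ :=
  sInf {k | ∃ S : Finset V, S.card = k ∧ IsDominatingSet G ↑S}

/-- `S` is a total dominating set of `G` (`N(S) = V`). -/
def IsTotalDominatingSet (G : SimpleGraph V) (S : Set V) : Prop :=
  ∀ v, ∃ u ∈ S, G.Adj u v

/-- The total domination number `γ_t(G)`. -/
noncomputable def totalDominationNumber (G : SimpleGraph V) [Fintype V] : ℕ :=
  sInf {k | ∃ S : Finset V, S.card = k ∧ IsTotalDominatingSet G ↑S}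

/-- The degree of a vertex. -/
noncomputable def deg (G : SimpleGraph V) (v : V) : ℕ :=
  (G.neighborSet v).ncard

/-- The maximum degree `Δ(G)`. -/
noncomputable def maxDeg (G : SimpleGraph V) [Fintype V] : ℕ :=
  Finset.univ.sup fun v => deg G v

/-- `A` is a symmetric real matrix whose off-diagonal nonzero pattern is
described by the graph `G`, i.e. `A ∈ S(G)`. -/
def MatrixOfGraph (G : SimpleGraph V) (A : Matrix V V ℝ) : Prop :=
  A.IsSymm ∧ ∀ i j, i ≠ j → (A i j ≠ 0 ↔ G.Adj i j)

/-- The nullity of a square real matrix. -/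
noncomputable def nullity [Fintype V] [DecidableEq V] (A : Matrix V V ℝ) : ℕ :=
  Fintype.card V - A.rank

/-- The maximum nullity `M(G)`. -/
noncomputable def maxNullity (G : SimpleGraph V) [Fintype V] [DecidableEq V] : ℕ :=
  sSup {k | ∃ A : Matrix V V ℝ, MatrixOfGraph G A ∧ nullity A = k}

/-- The tensor (direct) product of two simple graphs. -/
def tensorProd (G : SimpleGraph α) (H : SimpleGraph β) : SimpleGraph (α × β) where
  Adj p q := G.Adj p.1 q.1 ∧ H.Adj p.2 q.2
  symm := ⟨fun _ _ h => ⟨h.1.symm, h.2.symm⟩⟩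
  loopless := ⟨fun p h => G.loopless.irrefl p.1 h.1⟩

/-- The lexicographic product of two simple graphs. -/
def lexProd (G : SimpleGraph α) (H : SimpleGraph β) : SimpleGraph (α × β) where
  Adj p q := G.Adj p.1 q.1 ∨ (p.1 = q.1 ∧ H.Adj p.2 q.2)
  symm := ⟨fun _ _ h => h.elim (fun h' => Or.inl h'.symm) (fun h' => Or.inr ⟨h'.1.symm, h'.2.symm⟩)⟩
  loopless := ⟨fun p h => h.elim (fun h' => G.loopless.irrefl p.1 h') (fun h' => H.loopless.irrefl p.2 h'.2)⟩


/-!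
The least degree `δ` bounds the zero forcing number from below: the first vertex that forces is
blue together with all its neighbours but one. From above, a zero forcing set of one copy of `H`,
together with all the other copies, is zero forcing in `G * H`: every neighbour outside the chosen
copy is already blue, so each force in `H` remains a force there. As
`δ(G * H) = δ(G) |H| + δ(H)`, the two bounds agree when `G` is complete and `Z(H) = δ(H)`, and the
cycle has `Z(C_m) = δ(C_m) = 2`.
-/

theorem IsZeroForcingSet.exists_force {G : SimpleGraph V} {B : Set V} (hB : IsZeroForcingSet G B)
    (hne : B ≠ Set.univ) :
    ∃ u ∈ B, ∃ w ∉ B, G.Adj u w ∧ ∀ x, G.Adj u x → x ≠ w → x ∈ B := by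
  contrapose! hne with hclosed
  refine Set.eq_univ_iff_forall.2 fun v => ?_
  induction hB v with
  | init _ hv => exact hv
  | force u w _ huw _ hu hx =>
    by_contra hw
    obtain ⟨x, hux, hxw, hxB⟩ := hclosed u hu w hw huw
    exact hxB (hx x hux hxw)

section ZeroForcingNumber

variable [Fintype V] {G : SimpleGraph V}

theorem IsZeroForcingSet.minDegree_le_card [DecidableRel G.Adj] {B : Finset V}
    (hB : IsZeroForcingSet G (B : Set V)) : G.minDegree ≤ B.card := by
  classical
  rcases eq_or_ne B Finset.univ with rfl | hne
  · cases isEmpty_or_nonempty V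
    · simp
    · exact G.minDegree_lt_card.le
  obtain ⟨u, hu, w, hw, -, hforce⟩ := hB.exists_force (by simpa using hne)
  have hsub : insert u (G.neighborFinset u) ⊆ insert w B := by
    intro x hx
    rw [Finset.mem_insert, mem_neighborFinset] at hx
    rw [Finset.mem_insert, or_iff_not_imp_left]
    rcases hx with rfl | hx
    · exact fun _ => hu
    · exact hforce x hx
  have hcard := Finset.card_le_card hsub
  rw [Finset.card_insert_of_notMem (G.notMem_neighborFinset_self u), card_neighborFinset_eq_degree,
    Finset.card_insert_of_notMem hw] at hcard
  exact (G.minDegree_le_degree u).trans (Nat.le_of_succ_le_succ hcard)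

theorem IsZeroForcingSet.zeroForcingNumber_le_card {B : Finset V}
    (hB : IsZeroForcingSet G (B : Set V)) : zeroForcingNumber G ≤ B.card :=
  Nat.sInf_le ⟨B, rfl, hB⟩

variable (G)

theorem exists_isZeroForcingSet_card_eq :
    ∃ B : Finset V, B.card = zeroForcingNumber G ∧ IsZeroForcingSet G (B : Set V) :=
  Nat.sInf_mem (s := {k | ∃ B : Finset V, B.card = k ∧ IsZeroForcingSet G (B : Set V)})
    ⟨_, Finset.univ, rfl, fun v => .init v (by simp)⟩

theorem minDegree_le_zeroForcingNumber [DecidableRel G.Adj] :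
    G.minDegree ≤ zeroForcingNumber G := by
  obtain ⟨B, hcard, hB⟩ := exists_isZeroForcingSet_card_eq G
  exact hcard ▸ hB.minDegree_le_card

end ZeroForcingNumber

section LexProd

variable {G : SimpleGraph α} {H : SimpleGraph β}

theorem lexProd_adj {p q : α × β} :
    (lexProd G H).Adj p q ↔ G.Adj p.1 q.1 ∨ p.1 = q.1 ∧ H.Adj p.2 q.2 :=
  Iff.rfl

variable (G)

theorem IsZeroForcingSet.lexProd {B : Set β} (hB : IsZeroForcingSet H B) (a : α) :
    IsZeroForcingSet (lexProd G H) ({a}ᶜ ×ˢ Set.univ ∪ {a} ×ˢ B) := by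
  rintro ⟨i, j⟩
  rcases ne_or_eq i a with hi | rfl
  · exact .init _ (by simp [hi])
  induction hB j with
  | init j hj => exact .init _ (by simp [hj])
  | force u w _ huw _ hu hx =>
    refine .force (i, u) (i, w) hu (lexProd_adj.2 (Or.inr ⟨rfl, huw⟩)) ?_
    rintro ⟨k, x⟩ hadj hne
    rcases ne_or_eq k i with hk | rfl
    · exact .init _ (by simp [hk])
    · have hux : H.Adj u x := by simpa [lexProd_adj] using hadj
      exact hx x hux (by simpa using hne)

variable [Fintype α] [Fintype β]

theorem zeroForcingNumber_lexProd_le [Nonempty α] :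
    zeroForcingNumber (lexProd G H)
      ≤ (Fintype.card α - 1) * Fintype.card β + zeroForcingNumber H := by
  classical
  obtain ⟨B, hcard, hB⟩ := exists_isZeroForcingSet_card_eq H
  let a := Classical.arbitrary α
  have hdisj : Disjoint ({a}ᶜ ×ˢ Finset.univ) ({a} ×ˢ B) :=
    Finset.disjoint_product.2 (Or.inl disjoint_compl_left)
  calc zeroForcingNumber (lexProd G H)
      ≤ ({a}ᶜ ×ˢ Finset.univ ∪ {a} ×ˢ B : Finset (α × β)).card :=
        IsZeroForcingSet.zeroForcingNumber_le_card (by push_cast; exact hB.lexProd G a)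
    _ = (Fintype.card α - 1) * Fintype.card β + zeroForcingNumber H := by
        rw [Finset.card_union_of_disjoint hdisj, Finset.card_product, Finset.card_product,
          Finset.card_compl, Finset.card_singleton, Finset.card_univ, one_mul, hcard]

variable (H) [DecidableRel G.Adj] [DecidableRel H.Adj] [DecidableRel (lexProd G H).Adj]

theorem degree_lexProd (p : α × β) :
    (lexProd G H).degree p = G.degree p.1 * Fintype.card β + H.degree p.2 := by
  classical
  have hnbr : (lexProd G H).neighborFinset p
      = G.neighborFinset p.1 ×ˢ Finset.univ ∪ {p.1} ×ˢ H.neighborFinset p.2 := by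
    ext q
    simp only [mem_neighborFinset, lexProd_adj, Finset.mem_union, Finset.mem_product,
      Finset.mem_univ, and_true, Finset.mem_singleton, eq_comm]
  have hdisj : Disjoint (G.neighborFinset p.1 ×ˢ Finset.univ) ({p.1} ×ˢ H.neighborFinset p.2) :=
    Finset.disjoint_product.2 (Or.inl (by simp))
  rw [← card_neighborFinset_eq_degree, hnbr, Finset.card_union_of_disjoint hdisj,
    Finset.card_product, Finset.card_product, Finset.card_univ, Finset.card_singleton, one_mul,
    card_neighborFinset_eq_degree, card_neighborFinset_eq_degree]

theorem minDegree_lexProd [Nonempty α] :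
    (lexProd G H).minDegree = G.minDegree * Fintype.card β + H.minDegree := by
  cases isEmpty_or_nonempty β
  · simp
  obtain ⟨a, ha⟩ := G.exists_minimal_degree_vertex
  obtain ⟨b, hb⟩ := H.exists_minimal_degree_vertex
  apply le_antisymm
  · rw [ha, hb, ← degree_lexProd G H (a, b)]
    exact minDegree_le_degree _ _
  · refine le_minDegree_of_forall_le_degree _ _ fun p => ?_
    rw [degree_lexProd]
    gcongr <;> exact minDegree_le_degree _ _

end LexProd

section CycleGraph

variable (k : ℕ)

theorem isZeroForcingSet_cycleGraph : IsZeroForcingSet (cycleGraph (k + 2)) {0, 1} := by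
  intro v
  suffices ZFClosure (cycleGraph (k + 2)) {0, 1} v ∧ ZFClosure (cycleGraph (k + 2)) {0, 1} (v + 1)
    from this.1
  induction v using Fin.induction with
  | zero => exact ⟨.init _ (by simp), .init _ (by simp)⟩
  | succ i ih =>
    rw [← Fin.coeSucc_eq_succ]
    refine ⟨ih.2, .force _ _ ih.2 (by simp [cycleGraph_adj]) fun x hx hne => ?_⟩
    rw [← mem_neighborSet, cycleGraph_neighborSet, add_sub_cancel_right] at hx
    exact (hx.resolve_right hne) ▸ ih.1

theorem minDegree_cycleGraph : (cycleGraph (k + 3)).minDegree = 2 :=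
  IsRegularOfDegree.minDegree_eq _ fun _ => cycleGraph_degree_three_le

theorem zeroForcingNumber_cycleGraph : zeroForcingNumber (cycleGraph (k + 3)) = 2 := by
  apply le_antisymm
  · have hB : IsZeroForcingSet (cycleGraph (k + 3)) (({0, 1} : Finset (Fin (k + 3))) : Set _) := by
      simpa using isZeroForcingSet_cycleGraph (k + 1)
    exact hB.zeroForcingNumber_le_card.trans Finset.card_le_two
  · exact minDegree_cycleGraph k ▸ minDegree_le_zeroForcingNumber _

end CycleGraph

theorem stmt18_general [Fintype α] [Nonempty α] [Fintype β] (H : SimpleGraph β)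
    [DecidableRel H.Adj] (hH : zeroForcingNumber H = H.minDegree) :
    zeroForcingNumber (lexProd (⊤ : SimpleGraph α) H)
      = (Fintype.card α - 1) * Fintype.card β + H.minDegree := by
  classical
  apply le_antisymm
  · exact hH ▸ zeroForcingNumber_lexProd_le ⊤
  · rw [← minDegree_top (V := α), ← minDegree_lexProd]
    exact minDegree_le_zeroForcingNumber _

/-- For `n ≥ 2` and `m ≥ 3`, `Z(K_n * C_m) = (n−1)m + 2`. -/
theorem stmt18 (n m : ℕ) (hn : 2 ≤ n) (hm : 3 ≤ m) :
    zeroForcingNumber (lexProd (⊤ : SimpleGraph (Fin n)) (cycleGraph m)) = (n - 1) * m + 2 := by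
  obtain ⟨k, rfl⟩ := Nat.exists_eq_add_of_le' hm
  have : NeZero n := ⟨by omega⟩
  simpa [minDegree_cycleGraph] using stmt18_general (α := Fin n) (cycleGraph (k + 3))
    ((zeroForcingNumber_cycleGraph k).trans (minDegree_cycleGraph k).symm)

end PaperPD
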